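/- Let u : ℝⁿ → ℝ be continuous and bounded, let L : ℝⁿ → [0,∞) be a nonnegative C¹ function with L(0) = DL(0) = 0 and L superlinear, let t > 0, and let x ∈ ℝⁿ. Then the infimal convolution u_t is differentiable at x with Du_t(x) = −DL(a) for every a ∈ R u_t(x) if and only if DL(a) = DL(a') for every a, a' ∈ R u_t(x). -/

import Mathlib

open MeasureTheory Filter Metric Set
open scoped RealInnerProductSpace ENNReal Topology NNReal

noncomputable section

/-- Euclidean space `ℝⁿ`. -/
abbrev Eucl (n : ℕ) := EuclideanSpace ℝ (Fin n)

/-- Infimal convolution (Hopf–Lax formula): `u_t(x) = inf_a ( u(x + t a) + t L(a) )`. -/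
def infConv {n : ℕ} (u L : Eucl n → ℝ) (t : ℝ) (x : Eucl n) : ℝ :=
  ⨅ a : Eucl n, (u (x + t • a) + t * L a)

/-- `L` is superlinear: `L x / ‖x‖ → ∞` as `‖x‖ → ∞`. -/
def Superlinear {n : ℕ} (L : Eucl n → ℝ) : Prop :=
  Tendsto (fun x => L x / ‖x‖) (Bornology.cobounded (Eucl n)) atTop

/-- `g` is the weak (distributional) gradient of `u` on `ℝⁿ`. -/
def HasWeakGradient {n : ℕ} (u : Eucl n → ℝ) (g : Eucl n → Eucl n) : Prop :=
  ∀ φ : Eucl n → ℝ, ContDiff ℝ (⊤ : ℕ∞) φ → HasCompactSupport φ →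
    ∀ v : Eucl n, ∫ x, u x * fderiv ℝ φ x v = - ∫ x, φ x * ⟪g x, v⟫

/-- The set `R u_t(x)` of minimizers in the infimal convolution. -/
def minSet {n : ℕ} (u L : Eucl n → ℝ) (t : ℝ) (x : Eucl n) : Set (Eucl n) :=
  {a | infConv u L t x = u (x + t • a) + t * L a}

theorem aux_bddBelow {n : ℕ} (u L : Eucl n → ℝ) (hu_bdd : ∃ M, ∀ x, |u x| ≤ M)
    (hL_nonneg : ∀ x, 0 ≤ L x) (t : ℝ) (ht : 0 < t) (x : Eucl n) :
    BddBelow (range fun a : Eucl n => u (x + t • a) + t * L a) := by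
  obtain ⟨M, hM⟩ := hu_bdd
  refine ⟨-M, ?_⟩
  rintro _ ⟨a, rfl⟩
  have h1 := (abs_le.1 (hM (x + t • a))).1
  have h2 := mul_nonneg ht.le (hL_nonneg a)
  simp only
  linarith

theorem aux_mem {n : ℕ} (u L : Eucl n → ℝ) (hu_bdd : ∃ M, ∀ x, |u x| ≤ M)
    (hL_nonneg : ∀ x, 0 ≤ L x) (t : ℝ) (ht : 0 < t) (x b : Eucl n) :
    b ∈ minSet u L t x ↔ ∀ a, u (x + t • b) + t * L b ≤ u (x + t • a) + t * L a := by
  have hb := aux_bddBelow u L hu_bdd hL_nonneg t ht x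
  constructor
  · intro h a
    have h' : infConv u L t x = u (x + t • b) + t * L b := h
    rw [← h']
    exact ciInf_le hb a
  · intro h
    exact le_antisymm (ciInf_le hb b) (le_ciInf h)

theorem aux_tendsto {n : ℕ} (L : Eucl n → ℝ) (hL_sl : Superlinear L) :
    Tendsto L (Bornology.cobounded (Eucl n)) atTop := by
  have h := hL_sl.atTop_mul_atTop₀ (tendsto_norm_cobounded_atTop (E := Eucl n))
  refine h.congr' ?_
  filter_upwards [(tendsto_norm_cobounded_atTop (E := Eucl n)).eventually_gt_atTop 0] with x hx
  field_simp

theorem aux_bound {n : ℕ} (u L : Eucl n → ℝ) (hu_bdd : ∃ M, ∀ x, |u x| ≤ M)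
    (hL_nonneg : ∀ x, 0 ≤ L x) (hL0 : L 0 = 0) (hL_sl : Superlinear L) (t : ℝ) (ht : 0 < t) :
    ∃ K : Set (Eucl n), IsCompact K ∧ ∀ x, minSet u L t x ⊆ K := by
  obtain ⟨M, hM⟩ := hu_bdd
  have h := (aux_tendsto L hL_sl).eventually_gt_atTop (2 * M / t)
  rw [Metric.cobounded_eq_cocompact] at h
  obtain ⟨K, hK, hKs⟩ := mem_cocompact.1 h
  refine ⟨K, hK, fun x b hb => ?_⟩
  by_contra hbK
  have h1 : 2 * M / t < L b := hKs hbK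
  have h2 := (aux_mem u L ⟨M, hM⟩ hL_nonneg t ht x b).1 hb 0
  have h3 := (abs_le.1 (hM (x + t • b))).1
  have h4 := (abs_le.1 (hM (x + t • (0 : Eucl n)))).2
  rw [div_lt_iff₀ ht] at h1
  rw [hL0] at h2
  linarith

theorem aux_nonempty {n : ℕ} (u L : Eucl n → ℝ) (hu_cont : Continuous u)
    (hu_bdd : ∃ M, ∀ x, |u x| ≤ M) (hLc : Continuous L)
    (hL_nonneg : ∀ x, 0 ≤ L x) (hL_sl : Superlinear L) (t : ℝ) (ht : 0 < t) (x : Eucl n) :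
    (minSet u L t x).Nonempty := by
  obtain ⟨M, hM⟩ := id hu_bdd
  have hlim : Tendsto (fun a => u (x + t • a) + t * L a) (cocompact (Eucl n)) atTop := by
    rw [← Metric.cobounded_eq_cocompact]
    refine tendsto_atTop_add_left_of_le _ (-M) (fun a => (abs_le.1 (hM _)).1) ?_
    exact (aux_tendsto L hL_sl).const_mul_atTop ht
  obtain ⟨b, hb⟩ := Continuous.exists_forall_le (by fun_prop) hlim
  exact ⟨b, (aux_mem u L hu_bdd hL_nonneg t ht x b).2 hb⟩

theorem aux_unif {n : ℕ} (u L : Eucl n → ℝ) (hu_cont : Continuous u)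
    (hu_bdd : ∃ M, ∀ x, |u x| ≤ M) (hL_C1 : ContDiff ℝ 1 L)
    (hL_nonneg : ∀ x, 0 ≤ L x) (hL0 : L 0 = 0) (hL_sl : Superlinear L)
    (t : ℝ) (ht : 0 < t) (x : Eucl n)
    (q : Eucl n →L[ℝ] ℝ) (hq : ∀ b ∈ minSet u L t x, fderiv ℝ L b = q) (ε : ℝ) (hε : 0 < ε) :
    ∃ δ > 0, ∀ h k : Eucl n, ‖h‖ < δ → ‖k‖ < δ → ∀ b ∈ minSet u L t (x + h),
      ‖fderiv ℝ L (b + k) - q‖ ≤ ε := by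
  obtain ⟨K, hK, hKs⟩ := aux_bound u L hu_bdd hL_nonneg hL0 hL_sl t ht
  have hLc : Continuous L := hL_C1.continuous
  have hD : Continuous (fderiv ℝ L) := hL_C1.continuous_fderiv one_ne_zero
  have key : ∀ᶠ z : Eucl n × Eucl n in 𝓝 0, ∀ b ∈ K,
      b ∈ minSet u L t (x + z.1) → ‖fderiv ℝ L (b + z.2) - q‖ ≤ ε := by
    apply hK.eventually_forall_of_forall_eventually
    intro b _
    by_cases hb : b ∈ minSet u L t x
    · have hc : Continuous fun w : (Eucl n × Eucl n) × Eucl n =>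
          ‖fderiv ℝ L (w.2 + w.1.2) - q‖ := by fun_prop
      have h0 : ‖fderiv ℝ L (b + (0 : Eucl n)) - q‖ < ε := by
        rw [add_zero, hq b hb, sub_self, norm_zero]; exact hε
      have := (hc.tendsto ((0 : Eucl n × Eucl n), b)).eventually (gt_mem_nhds h0)
      filter_upwards [this] with w hw _
      exact hw.le
    · rw [aux_mem u L hu_bdd hL_nonneg t ht] at hb
      push Not at hb
      obtain ⟨a, ha⟩ := hb
      have hc1 : Continuous fun w : (Eucl n × Eucl n) × Eucl n =>
          u (x + w.1.1 + t • a) + t * L a := by fun_prop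
      have hc2 : Continuous fun w : (Eucl n × Eucl n) × Eucl n =>
          u (x + w.1.1 + t • w.2) + t * L w.2 := by fun_prop
      have := (isOpen_lt hc1 hc2).mem_nhds (x := ((0 : Eucl n × Eucl n), b)) (by simpa using ha)
      filter_upwards [this] with w hw hmem
      exact absurd ((aux_mem u L hu_bdd hL_nonneg t ht _ _).1 hmem a) (not_le.2 hw)
  obtain ⟨δ, hδ, H⟩ := Metric.eventually_nhds_iff.1 key
  refine ⟨δ, hδ, fun h k hh hk b hb => ?_⟩
  refine H (y := (h, k)) ?_ b (hKs _ hb) hb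
  rw [dist_zero_right, Prod.norm_mk]
  exact max_lt hh hk

theorem aux_main {n : ℕ} (u L : Eucl n → ℝ) (hu_cont : Continuous u)
    (hu_bdd : ∃ M, ∀ x, |u x| ≤ M) (hL_C1 : ContDiff ℝ 1 L)
    (hL_nonneg : ∀ x, 0 ≤ L x) (hL0 : L 0 = 0) (hL_sl : Superlinear L)
    (t : ℝ) (ht : 0 < t) (x : Eucl n)
    (q : Eucl n →L[ℝ] ℝ) (hq : ∀ b ∈ minSet u L t x, fderiv ℝ L b = q) :
    HasFDerivAt (infConv u L t) (-q) x := by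
  rw [hasFDerivAt_iff_isLittleO_nhds_zero, Asymptotics.isLittleO_iff]
  intro ε hε
  obtain ⟨δ, hδ, H⟩ := aux_unif u L hu_cont hu_bdd hL_C1 hL_nonneg hL0 hL_sl t ht x q hq ε hε
  have hne := aux_nonempty u L hu_cont hu_bdd hL_C1.continuous hL_nonneg hL_sl t ht
  have hmv : ∀ h k : Eucl n, ‖h‖ < δ → ‖k‖ < δ → ∀ b ∈ minSet u L t (x + h),
      |L (b + k) - L b - q k| ≤ ε * ‖k‖ := by
    intro h k hh hk b hb
    have := (convex_ball b δ).norm_image_sub_le_of_norm_fderiv_le' (𝕜 := ℝ) (f := L) (φ := q)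
      (C := ε) (x := b) (y := b + k)
      (fun y _ => (hL_C1.differentiable one_ne_zero) y)
      (fun y hy => by
        have := H h (y - b) hh (by simpa [dist_eq_norm] using hy) b hb
        simpa using this)
      (mem_ball_self hδ) (by simpa [dist_eq_norm] using hk)
    simpa using this
  have hev : ∀ᶠ h : Eucl n in 𝓝 0, ‖h‖ < min δ (t * δ) := by
    have : Continuous fun h : Eucl n => ‖h‖ := continuous_norm
    have := this.tendsto 0
    rw [norm_zero] at this
    exact this.eventually (gt_mem_nhds (lt_min hδ (mul_pos ht hδ)))
  filter_upwards [hev] with h hh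
  have hh1 := hh.trans_le (min_le_left _ _)
  have hh2 := hh.trans_le (min_le_right _ _)
  have hkn : ‖t⁻¹ • h‖ = t⁻¹ * ‖h‖ := by
    rw [norm_smul, Real.norm_of_nonneg (inv_nonneg.2 ht.le)]
  have hk : ‖t⁻¹ • h‖ < δ := by
    rw [hkn, inv_mul_lt_iff₀ ht]; exact hh2
  have hsm : t • t⁻¹ • h = h := smul_inv_smul₀ ht.ne' h
  have hqk : t * q (t⁻¹ • h) = q h := by
    rw [map_smul, smul_eq_mul, mul_inv_cancel_left₀ ht.ne']
  have hnk : t * (ε * ‖t⁻¹ • h‖) = ε * ‖h‖ := by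
    rw [hkn]; field_simp
  obtain ⟨a, ha⟩ := hne x
  obtain ⟨b, hb⟩ := hne (x + h)
  have hA := hmv 0 (-(t⁻¹ • h)) (by simpa using hδ) (by simpa using hk) a (by simpa using ha)
  have hB := hmv h (t⁻¹ • h) hh1 hk b hb
  rw [norm_neg, map_neg] at hA
  have hA' := mul_le_mul_of_nonneg_left (abs_le.1 hA).2 ht.le
  have hB' := mul_le_mul_of_nonneg_left (abs_le.1 hB).2 ht.le
  have eA : infConv u L t x = u (x + t • a) + t * L a := ha
  have eB : infConv u L t (x + h) = u (x + h + t • b) + t * L b := hb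
  have iA : infConv u L t (x + h) ≤ u (x + t • a) + t * L (a + -(t⁻¹ • h)) := by
    have := ciInf_le (aux_bddBelow u L hu_bdd hL_nonneg t ht (x + h)) (a + -(t⁻¹ • h))
    have e : x + h + t • (a + -(t⁻¹ • h)) = x + t • a := by
      rw [smul_add, smul_neg, hsm]; abel
    simp only [e] at this
    exact this
  have iB : infConv u L t x ≤ u (x + h + t • b) + t * L (b + t⁻¹ • h) := by
    have := ciInf_le (aux_bddBelow u L hu_bdd hL_nonneg t ht x) (b + t⁻¹ • h)
    have e : x + t • (b + t⁻¹ • h) = x + h + t • b := by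
      rw [smul_add, hsm]; abel
    simp only [e] at this
    exact this
  rw [Real.norm_eq_abs, abs_le, ContinuousLinearMap.neg_apply]
  constructor <;> nlinarith

/-- Corollary 2.2. For continuous bounded `u` and `t > 0`, the infimal
convolution `u_t` is differentiable at `x` with `Du_t(x) = −DL(a)` for every
`a ∈ R u_t(x)` if and only if `DL(a) = DL(a')` for all `a, a' ∈ R u_t(x)`. -/
theorem stmt6 {n : ℕ}
    (u : Eucl n → ℝ) (hu_cont : Continuous u) (hu_bdd : ∃ M, ∀ x, |u x| ≤ M)
    (L : Eucl n → ℝ) (hL_nonneg : ∀ x, 0 ≤ L x) (hL_C1 : ContDiff ℝ 1 L)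
    (hL0 : L 0 = 0) (hDL0 : gradient L 0 = 0) (hL_sl : Superlinear L)
    (t : ℝ) (ht : 0 < t) (x : Eucl n) :
    (∀ a ∈ minSet u L t x, HasGradientAt (infConv u L t) (-(gradient L a)) x) ↔
    (∀ a ∈ minSet u L t x, ∀ a' ∈ minSet u L t x, gradient L a = gradient L a') := by
  constructor
  · intro h a ha a' ha'
    exact neg_injective ((h a ha).unique (h a' ha'))
  · intro h a ha
    rw [hasGradientAt_iff_hasFDerivAt, map_neg, toDual_gradient]
    refine aux_main u L hu_cont hu_bdd hL_C1 hL_nonneg hL0 hL_sl t ht x _ fun b hb => ?_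
    rw [← toDual_gradient, ← toDual_gradient, h b hb a ha]
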